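/- arXiv:2406.07311 — 2 statements merged into one kernel-verified Lean document; each statement's English description precedes it below -/
import Mathlib

section
/- Let n ≥ 3 and let λ be a partition of n. Then Σ_{π ∈ C_λ} occ₍[₁₋₂₋₃)₎(π) = |C_λ| · ( C(n−1,2)/6 + (5n−7)·X₁/24 + X₂/8 + 5·X₃/24 + X₄/(8n) ), where occ₍[₁₋₂₋₃)₎(π) = #{(j,k) : 1 < j < k ≤ n, π(1) < π(j) < π(k)} is the number of occurrences of the vincular pattern [1-2-3) in π (occurrences of the classical pattern 123 that begin at the first position). -/
open Equiv Finset

/-- The conjugacy class of permutations of `Fin n` with cycle type `lam`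
(cycle type includes fixed points as parts of size 1, via `Equiv.Perm.partition`). -/
def conjClass (n : ℕ) (lam : n.Partition) : Finset (Equiv.Perm (Fin n)) :=
  Finset.univ.filter fun π => (Equiv.Perm.partition π).parts = lam.parts

/-!
Averaging over the class of `π` is averaging over its conjugates `σ * π * σ⁻¹` for `σ` uniform.
Condition on `i = σ⁻¹ 0`: an occurrence of `[1-2-3)` in `σ * π * σ⁻¹` then corresponds to a pair
`(u, v)` with `u ≠ i`, `σ u < σ v` and `σ (π i) < σ (π u) < σ (π v)`. Write each comparison as
`𝟙[a < b] = (1 + s) / 2` with `s` a sign and expand. Reversing the order of the nonzero elements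
changes every sign, so products of an odd number of signs average to zero, while the average of a
product of two signs depends only on how the two compared pairs overlap. Summing these correlations
over all pairs `(u, v)`, and then over `i`, counts fixed points of `π`, `π ^ 2` and `π ^ 3`.
-/

open scoped BigOperators

local notation "𝟙[" P "]" => (if P then (1 : ℚ) else 0)

section CycleCounting

variable {α : Type*} [Fintype α] [DecidableEq α] (π : Perm α)

/-- The number of fixed points. The class of `π` enters the main formula only through the fixed
point counts of `π`, `π ^ 2` and `π ^ 3`. -/
def fixedPointCount : ℕ := #{x | π x = x}

lemma sum_iverson_fixed : ∑ x, 𝟙[π x = x] = fixedPointCount π := sum_boole _ _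

lemma card_filter_card_support_cycleOf {k : ℕ} (hk : k ≠ 0) :
    #{x | #(π.cycleOf x).support = k} = k * π.cycleType.count k := by
  have maps_to : ∀ x ∈ ({x | #(π.cycleOf x).support = k} : Finset α),
      π.cycleOf x ∈ {c ∈ π.cycleFactorsFinset | #c.support = k} := by
    intro x hx
    simp only [mem_filter, mem_univ, true_and] at hx ⊢
    refine ⟨Perm.cycleOf_ne_one_iff_mem_cycleFactorsFinset.1 fun h => hk ?_, hx⟩
    rw [← hx, h, Perm.support_one, card_empty]
  have fiber_eq : ∀ c ∈ {c ∈ π.cycleFactorsFinset | #c.support = k},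
      #{x ∈ ({x | #(π.cycleOf x).support = k} : Finset α) | π.cycleOf x = c} = k := by
    intro c hc
    obtain ⟨hc, hck⟩ := mem_filter.1 hc
    rw [← hck]
    congr 1
    ext x
    simp only [mem_filter, mem_univ, true_and]
    constructor
    · rintro ⟨-, rfl⟩
      exact Perm.mem_support_cycleOf_iff.2
        ⟨.refl _ _, Perm.cycleOf_mem_cycleFactorsFinset_iff.1 hc⟩
    · intro hx
      rw [← Perm.cycle_is_cycleOf hx hc]
      exact ⟨rfl, rfl⟩
  rw [card_eq_sum_card_fiberwise maps_to, sum_const_nat fiber_eq, mul_comm, Perm.cycleType_def,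
    Multiset.count_map, Finset.card_def, filter_val]
  simp only [Function.comp_apply, eq_comm]

lemma pow_apply_eq_iff_card_support_cycleOf {k : ℕ} (hk : k.Prime) (x : α) :
    (π ^ k) x = x ↔ π x = x ∨ #(π.cycleOf x).support = k := by
  by_cases hx : π x = x
  · simp only [hx, Perm.pow_apply_eq_self_of_apply_eq_self hx, true_or]
  · have mem : x ∈ (π.cycleOf x).support := (Perm.mem_support_cycleOf_iff' hx).2 (.refl _ _)
    have two_le := Perm.two_le_card_support_cycleOf_iff.2 hx
    rw [(Perm.isCycleOn_support_cycleOf π x).pow_apply_eq mem, Nat.dvd_prime hk]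
    simp only [hx, false_or, or_iff_right_iff_imp]
    omega

lemma fixedPointCount_pow_prime {k : ℕ} (hk : k.Prime) :
    fixedPointCount (π ^ k) = fixedPointCount π + k * π.cycleType.count k := by
  have disj : Disjoint (α := Finset α) {x | π x = x} {x | #(π.cycleOf x).support = k} := by
    refine disjoint_filter.2 fun x _ hx hcard => hk.ne_zero ?_
    rw [← hcard, (Perm.cycleOf_eq_one_iff π).2 hx, Perm.support_one, card_empty]
  rw [← card_filter_card_support_cycleOf π hk.ne_zero, fixedPointCount, fixedPointCount,
    ← card_union_of_disjoint disj, ← filter_or]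
  simp only [pow_apply_eq_iff_card_support_cycleOf π hk]

lemma count_one_partition : π.partition.parts.count 1 = fixedPointCount π := by
  have not_mem : 1 ∉ π.cycleType := fun h => (Perm.one_lt_of_mem_cycleType h).false
  have compl : ({x | π x = x} : Finset α) = π.supportᶜ := by ext; simp
  rw [Perm.parts_partition, Multiset.count_add, Multiset.count_eq_zero_of_notMem not_mem,
    Multiset.count_replicate_self, zero_add, fixedPointCount, compl, card_compl]

lemma count_partition_of_one_lt {k : ℕ} (hk : 1 < k) :
    π.partition.parts.count k = π.cycleType.count k := by
  simp [Perm.parts_partition, Multiset.count_replicate, hk.ne]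

end CycleCounting

section OrderSign

variable {β : Type*} [LinearOrder β]

/-- The antisymmetric comparison of `a` and `b`: `1` if `a < b`, `-1` if `b < a`, `0` if `a = b`. -/
def orderSign (a b : β) : ℚ := 𝟙[a < b] - 𝟙[b < a]

lemma orderSign_swap (a b : β) : orderSign b a = -orderSign a b := (neg_sub _ _).symm

lemma iverson_lt_eq {a b : β} (h : a ≠ b) : 𝟙[a < b] = (1 + orderSign a b) / 2 := by
  rcases h.lt_or_gt with h | h <;> norm_num [orderSign, h, h.not_gt]

lemma orderSign_mul_self {a b : β} (h : a ≠ b) : orderSign a b * orderSign a b = 1 := by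
  rcases h.lt_or_gt with h | h <;> norm_num [orderSign, h, h.not_gt]

-- The least and the greatest of three elements contribute `1` each, the middle one `-1`.
lemma orderSign_cyclic {a b c : β} (hac : a ≠ c) (hbc : b ≠ c) :
    orderSign a b * orderSign a c + orderSign b a * orderSign b c
      + orderSign c a * orderSign c b = 1 := by
  unfold orderSign
  grind

lemma orderSign_neg {n : ℕ} [NeZero n] {a b : Fin n} (ha : a ≠ 0) (hb : b ≠ 0) :
    orderSign (-a) (-b) = -orderSign a b := by
  have neg_lt_neg_iff : ∀ {x y : Fin n}, x ≠ 0 → y ≠ 0 → (-x < -y ↔ y < x) := by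
    intro x y hx hy
    simp only [Fin.lt_def, Fin.val_neg, hx, hy, if_false]
    omega
  rw [← orderSign_swap]
  simp only [orderSign, neg_lt_neg_iff, ha, hb, ne_eq, not_false_eq_true]

end OrderSign

section Averages

variable {α : Type*} [Fintype α] [DecidableEq α]

/-- The permutations `σ` with `σ i = z`: averaging over them is averaging over a uniform random
permutation conditioned on `σ i = z`. -/
def permsSending (i z : α) : Finset (Perm α) := {σ | σ i = z}

lemma mem_permsSending {i z : α} {σ : Perm α} : σ ∈ permsSending i z ↔ σ i = z := by
  simp [permsSending]

lemma permsSending_nonempty (i z : α) : (permsSending i z).Nonempty :=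
  ⟨swap i z, mem_permsSending.2 (swap_apply_left i z)⟩

lemma expect_permsSending_mul_right {i : α} (z : α) {ρ : Perm α} (hρ : ρ i = i)
    (F : Perm α → ℚ) :
    𝔼 σ ∈ permsSending i z, F (σ * ρ) = 𝔼 σ ∈ permsSending i z, F σ :=
  expect_equiv (Equiv.mulRight ρ) (by simp [mem_permsSending, hρ]) fun _ _ => rfl

lemma expect_permsSending_mul_left {z : α} (i : α) {ρ : Perm α} (hρ : ρ z = z)
    (F : Perm α → ℚ) :
    𝔼 σ ∈ permsSending i z, F (ρ * σ) = 𝔼 σ ∈ permsSending i z, F σ := by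
  refine expect_equiv (Equiv.mulLeft ρ) (fun σ => ?_) fun _ _ => rfl
  rw [mem_permsSending, mem_permsSending, Equiv.coe_mulLeft, Perm.mul_apply,
    ← ρ.injective.eq_iff, hρ]

lemma card_permsSending_eq (i j z : α) : #(permsSending i z) = #(permsSending j z) :=
  card_equiv (Equiv.mulRight (swap i j)) fun σ => by simp [mem_permsSending]

lemma expect_perm_eq_expect_permsSending (z : α) (F : Perm α → ℚ) :
    𝔼 σ, F σ = 𝔼 i, 𝔼 σ ∈ permsSending i z, F σ := by
  have fiberwise (G : Perm α → ℚ) : ∑ σ, G σ = ∑ i, ∑ σ ∈ permsSending i z, G σ := by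
    rw [← sum_fiberwise univ (fun σ : Perm α => σ⁻¹ z) G]
    refine sum_congr rfl fun i _ => sum_congr ?_ fun _ _ => rfl
    ext σ
    simp only [mem_filter, mem_univ, true_and, mem_permsSending, Perm.inv_eq_iff_eq]
    exact eq_comm
  have card_perm : (Fintype.card (Perm α) : ℚ) = Fintype.card α * #(permsSending z z) := by
    have h := fiberwise 1
    simp only [Pi.one_apply, sum_const, card_univ, card_permsSending_eq _ z z] at h
    simpa using h
  simp only [expect_eq_sum_div_card, card_permsSending_eq _ z z, ← sum_div, card_univ]
  rw [fiberwise F, card_perm, div_div, mul_comm]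

end Averages

section SignCorrelation

/-- The mean of the product of the signs comparing `x` with `y` and `z` with `w` in a random linear
order, for `x ≠ y` and `z ≠ w`: `0` for disjoint pairs, `±1 / 3` for pairs sharing one element,
`±1` for equal pairs. The single closed form is what makes it summable over pairs; it vanishes
for `x = y`. -/
def signCorrelation {α : Type*} [DecidableEq α] (x y z w : α) : ℚ :=
  (𝟙[x = z] + 𝟙[y = w] - 𝟙[x = w] - 𝟙[y = z] + 𝟙[x = z] * 𝟙[y = w] - 𝟙[x = w] * 𝟙[y = z]) / 3

variable {α : Type*} [Fintype α] [LinearOrder α] {i x y z w : α} (k : α)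

lemma expect_orderSign_mul_of_disjoint (hx : x ≠ i) (hy : y ≠ i)
    (hxz : x ≠ z) (hxw : x ≠ w) (hyz : y ≠ z) (hyw : y ≠ w) :
    𝔼 σ ∈ permsSending i k, orderSign (σ x) (σ y) * orderSign (σ z) (σ w) = 0 := by
  have swapped := expect_permsSending_mul_right k (swap_apply_of_ne_of_ne hx.symm hy.symm)
    fun σ => orderSign (σ x) (σ y) * orderSign (σ z) (σ w)
  simp only [Perm.mul_apply, swap_apply_left, swap_apply_right,
    swap_apply_of_ne_of_ne hxz.symm hyz.symm, swap_apply_of_ne_of_ne hxw.symm hyw.symm] at swapped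
  rw [← self_eq_neg, ← expect_neg_distrib, ← swapped]
  exact expect_congr rfl fun σ _ => by rw [orderSign_swap (σ x), neg_mul]

lemma expect_orderSign_mul_of_shared (hx : x ≠ i) (hy : y ≠ i) (hz : z ≠ i)
    (hxy : x ≠ y) (hxz : x ≠ z) (hyz : y ≠ z) :
    𝔼 σ ∈ permsSending i k, orderSign (σ x) (σ y) * orderSign (σ x) (σ z) = 1 / 3 := by
  have swap_xy := expect_permsSending_mul_right k (swap_apply_of_ne_of_ne hx.symm hy.symm)
    fun σ => orderSign (σ x) (σ y) * orderSign (σ x) (σ z)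
  have swap_xz := expect_permsSending_mul_right k (swap_apply_of_ne_of_ne hx.symm hz.symm)
    fun σ => orderSign (σ x) (σ y) * orderSign (σ x) (σ z)
  have total : 𝔼 σ ∈ permsSending i k, (orderSign (σ x) (σ y) * orderSign (σ x) (σ z)
      + orderSign (σ y) (σ x) * orderSign (σ y) (σ z)
      + orderSign (σ z) (σ y) * orderSign (σ z) (σ x)) = 1 := by
    rw [← expect_const (permsSending_nonempty i k) (1 : ℚ)]
    refine expect_congr rfl fun σ _ => ?_
    rw [mul_comm (orderSign (σ z) (σ y))]
    exact orderSign_cyclic (σ.injective.ne hxz) (σ.injective.ne hyz)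
  simp only [Perm.mul_apply, swap_apply_left, swap_apply_right,
    swap_apply_of_ne_of_ne hxz.symm hyz.symm, swap_apply_of_ne_of_ne hxy.symm hyz]
    at swap_xy swap_xz
  rw [expect_add_distrib, expect_add_distrib, swap_xy, swap_xz] at total
  linarith

lemma expect_orderSign_mul_self (hxy : x ≠ y) :
    𝔼 σ ∈ permsSending i k, orderSign (σ x) (σ y) * orderSign (σ x) (σ y) = 1 := by
  rw [← expect_const (permsSending_nonempty i k) (1 : ℚ)]
  exact expect_congr rfl fun σ _ => orderSign_mul_self (σ.injective.ne hxy)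

theorem expect_orderSign_mul (hx : x ≠ i) (hy : y ≠ i) (hz : z ≠ i) (hw : w ≠ i)
    (hxy : x ≠ y) (hzw : z ≠ w) :
    𝔼 σ ∈ permsSending i k, orderSign (σ x) (σ y) * orderSign (σ z) (σ w) =
      signCorrelation x y z w := by
  have flip_xy (σ : Perm α) := orderSign_swap (σ y) (σ x)
  have flip_zw (σ : Perm α) := orderSign_swap (σ w) (σ z)
  rcases eq_or_ne x z with rfl | hxz
  · rcases eq_or_ne y w with rfl | hyw
    · rw [expect_orderSign_mul_self k hxy]
      norm_num [signCorrelation, hxy, hxy.symm]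
    · rw [expect_orderSign_mul_of_shared k hx hy hw hxy hzw hyw]
      simp [signCorrelation, hxy.symm, hzw, hyw]
  rcases eq_or_ne y w with rfl | hyw
  · simp only [flip_xy, flip_zw, neg_mul_neg]
    rw [expect_orderSign_mul_of_shared k hy hx hz hxy.symm hzw.symm hxz]
    simp [signCorrelation, hxy, hxz, hzw.symm]
  rcases eq_or_ne x w with rfl | hxw
  · simp only [flip_zw, mul_neg, expect_neg_distrib]
    rcases eq_or_ne y z with rfl | hyz
    · rw [expect_orderSign_mul_self k hxy]
      norm_num [signCorrelation, hxy, hxy.symm]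
    · rw [expect_orderSign_mul_of_shared k hx hy hz hxy hxz hyz]
      norm_num [signCorrelation, hxz, hyw, hyz]
  rcases eq_or_ne y z with rfl | hyz
  · simp only [flip_xy, neg_mul, expect_neg_distrib]
    rw [expect_orderSign_mul_of_shared k hy hx hw hxy.symm hyw hxw]
    norm_num [signCorrelation, hxz, hyw, hxw]
  · rw [expect_orderSign_mul_of_disjoint k hx hy hxz hxw hyz hyw]
    simp [signCorrelation, hxz, hxw, hyz, hyw]

lemma expect_orderSign (hx : x ≠ i) (hy : y ≠ i) :
    𝔼 σ ∈ permsSending i k, orderSign (σ x) (σ y) = 0 := by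
  have swapped := expect_permsSending_mul_right k (swap_apply_of_ne_of_ne hx.symm hy.symm)
    fun σ => orderSign (σ x) (σ y)
  simp only [Perm.mul_apply, swap_apply_left, swap_apply_right] at swapped
  rw [← self_eq_neg, ← expect_neg_distrib, ← swapped]
  exact expect_congr rfl fun σ _ => orderSign_swap _ _

theorem expect_iverson_lt_mul_lt (hx : x ≠ i) (hy : y ≠ i) (hz : z ≠ i) (hw : w ≠ i)
    (hxy : x ≠ y) (hzw : z ≠ w) :
    𝔼 σ ∈ permsSending i k, 𝟙[σ x < σ y] * 𝟙[σ z < σ w] = (1 + signCorrelation x y z w) / 4 := by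
  have expand (σ : Perm α) : 𝟙[σ x < σ y] * 𝟙[σ z < σ w] =
      (1 + orderSign (σ x) (σ y) + orderSign (σ z) (σ w)
        + orderSign (σ x) (σ y) * orderSign (σ z) (σ w)) / 4 := by
    rw [iverson_lt_eq (σ.injective.ne hxy), iverson_lt_eq (σ.injective.ne hzw)]
    ring
  simp only [expand, ← expect_div, expect_add_distrib, expect_const (permsSending_nonempty i k),
    expect_orderSign k hx hy, expect_orderSign k hz hw, expect_orderSign_mul k hx hy hz hw hxy hzw,
    add_zero]

end SignCorrelation

section ThreeComparisons

variable {n : ℕ} [NeZero n] {i u v a b c : Fin n}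

/-- Negation on `Fin n` fixes `0` and reverses the order of the other elements. -/
lemma expect_eq_zero_of_neg_mul {F : Perm (Fin n) → ℚ}
    (hF : ∀ σ ∈ permsSending i 0, F (Equiv.neg (Fin n) * σ) = -F σ) :
    𝔼 σ ∈ permsSending i 0, F σ = 0 := by
  rw [← self_eq_neg, ← expect_neg_distrib,
    ← expect_permsSending_mul_left i (ρ := Equiv.neg (Fin n)) neg_zero F]
  exact expect_congr rfl hF

lemma orderSign_neg_mul {σ : Perm (Fin n)} (hσ : σ ∈ permsSending i 0) {x y : Fin n} (hx : x ≠ i)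
    (hy : y ≠ i) :
    orderSign ((Equiv.neg (Fin n) * σ) x) ((Equiv.neg (Fin n) * σ) y) =
      -orderSign (σ x) (σ y) := by
  rw [mem_permsSending] at hσ
  exact orderSign_neg (hσ ▸ σ.injective.ne hx) (hσ ▸ σ.injective.ne hy)

theorem expect_iverson_lt_mul_lt_mul_lt (hu : u ≠ i) (hv : v ≠ i) (ha : a ≠ i) (hb : b ≠ i)
    (hc : c ≠ i) (huv : u ≠ v) (hab : a ≠ b) (hac : a ≠ c) (hbc : b ≠ c) :
    𝔼 σ ∈ permsSending i 0, 𝟙[σ u < σ v] * 𝟙[σ a < σ b] * 𝟙[σ b < σ c] =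
      (2 / 3 + signCorrelation u v a b + signCorrelation u v b c) / 8 := by
  let odd (σ : Perm (Fin n)) : ℚ :=
    orderSign (σ u) (σ v) + orderSign (σ a) (σ b) + orderSign (σ b) (σ c)
      + orderSign (σ u) (σ v) * orderSign (σ a) (σ b) * orderSign (σ b) (σ c)
  have expect_odd : 𝔼 σ ∈ permsSending i 0, odd σ = 0 := by
    refine expect_eq_zero_of_neg_mul fun σ hσ => ?_
    simp only [odd, orderSign_neg_mul hσ, hu, hv, ha, hb, hc, ne_eq, not_false_eq_true]
    ring
  have expand (σ : Perm (Fin n)) : 𝟙[σ u < σ v] * 𝟙[σ a < σ b] * 𝟙[σ b < σ c] =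
      (1 + odd σ + orderSign (σ u) (σ v) * orderSign (σ a) (σ b)
        + orderSign (σ u) (σ v) * orderSign (σ b) (σ c)
        + orderSign (σ a) (σ b) * orderSign (σ b) (σ c)) / 8 := by
    simp only [odd, iverson_lt_eq (σ.injective.ne huv), iverson_lt_eq (σ.injective.ne hab),
      iverson_lt_eq (σ.injective.ne hbc)]
    ring
  have consecutive : signCorrelation a b b c = -1 / 3 := by
    norm_num [signCorrelation, hab, hac, hbc]
  simp only [expand, ← expect_div, expect_add_distrib, expect_const (permsSending_nonempty i 0),
    expect_odd, expect_orderSign_mul 0 hu hv ha hb huv hab,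
    expect_orderSign_mul 0 hu hv hb hc huv hbc, expect_orderSign_mul 0 ha hb hb hc hab hbc,
    consecutive]
  ring

end ThreeComparisons

section CorrelationSums

variable {α : Type*} [DecidableEq α] (T : Finset α) (g : α → α)

lemma sum_offDiag_signCorrelation (z w : α → α → α) :
    ∑ x ∈ T.offDiag, signCorrelation x.1 x.2 (z x.1 x.2) (w x.1 x.2) =
      ∑ u ∈ T, ∑ v ∈ T, signCorrelation u v (z u v) (w u v) := by
  have diag_zero : ∀ x ∈ T ×ˢ T, x ∉ T.offDiag →
      signCorrelation x.1 x.2 (z x.1 x.2) (w x.1 x.2) = 0 := by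
    rintro ⟨u, v⟩ hx hoff
    obtain rfl : u = v := by simp_all
    simp only [signCorrelation]
    ring
  rw [← sum_product']
  refine sum_subset (fun x hx => ?_) diag_zero
  rw [mem_offDiag] at hx
  exact mem_product.2 ⟨hx.1, hx.2.1⟩

lemma sum_offDiag_signCorrelation_map :
    ∑ x ∈ T.offDiag, signCorrelation x.1 x.2 (g x.1) (g x.2) =
      (2 * #T * #{u ∈ T | g u = u} - 2 * #{u ∈ T | g u ∈ T} + #{u ∈ T | g u = u} ^ 2
        - #{u ∈ T | g u ∈ T ∧ g (g u) = u}) / 3 := by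
  rw [sum_offDiag_signCorrelation T (fun u _ => g u) (fun _ v => g v)]
  have fixed : ∑ u ∈ T, 𝟙[u = g u] = #{u ∈ T | g u = u} := by simp [eq_comm]
  have image : ∑ u ∈ T, ∑ v ∈ T, 𝟙[v = g u] = #{u ∈ T | g u ∈ T} := by simp
  have preimage : ∑ u ∈ T, ∑ v ∈ T, 𝟙[u = g v] = #{u ∈ T | g u ∈ T} := by rw [sum_comm, image]
  have fixed_fixed : ∑ u ∈ T, ∑ v ∈ T, 𝟙[u = g u] * 𝟙[v = g v] = #{u ∈ T | g u = u} ^ 2 := by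
    rw [← sum_mul_sum, fixed, sq]
  have two_cycles : ∑ u ∈ T, ∑ v ∈ T, 𝟙[u = g v] * 𝟙[v = g u] =
      #{u ∈ T | g u ∈ T ∧ g (g u) = u} := by
    have product_eq (u v : α) :
        𝟙[u = g v] * 𝟙[v = g u] = if v = g u then 𝟙[g (g u) = u] else 0 := by
      grind
    simp only [product_eq, sum_ite_eq']
    simp only [← ite_and, sum_boole]
  simp only [signCorrelation, ← sum_div, sum_add_distrib, sum_sub_distrib, sum_const,
    nsmul_eq_mul, ← mul_sum _ _ (#T : ℚ), fixed, image, preimage, fixed_fixed, two_cycles]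
  ring

lemma sum_offDiag_signCorrelation_left (a : α) :
    ∑ x ∈ T.offDiag, signCorrelation x.1 x.2 a (g x.1) =
      (#{u ∈ T | g u ∈ T} - #T * #{u ∈ T | g u = u} + 𝟙[a ∈ T ∧ g a ∈ T]
        - #{u ∈ T | g u = u} * 𝟙[a ∈ T]) / 3 := by
  rw [sum_offDiag_signCorrelation T (fun _ _ => a) (fun u _ => g u)]
  have fixed : ∑ u ∈ T, 𝟙[u = g u] = #{u ∈ T | g u = u} := by simp [eq_comm]
  have image : ∑ u ∈ T, ∑ v ∈ T, 𝟙[v = g u] = #{u ∈ T | g u ∈ T} := by simp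
  have point : ∑ u ∈ T, 𝟙[u = a] = 𝟙[a ∈ T] := by simp
  have point_image : ∑ u ∈ T, ∑ v ∈ T, 𝟙[u = a] * 𝟙[v = g u] = 𝟙[a ∈ T ∧ g a ∈ T] := by
    simp only [← mul_sum, sum_ite_eq']
    simp only [ite_mul, one_mul, zero_mul, sum_ite_eq', ite_and]
  have fixed_point : ∑ u ∈ T, ∑ v ∈ T, 𝟙[u = g u] * 𝟙[v = a] =
      #{u ∈ T | g u = u} * 𝟙[a ∈ T] := by
    rw [← sum_mul_sum, fixed, point]
  simp only [signCorrelation, ← sum_div, sum_add_distrib, sum_sub_distrib, sum_const,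
    nsmul_eq_mul, ← mul_sum _ _ (#T : ℚ), fixed, image, point, point_image, fixed_point]
  ring

end CorrelationSums

lemma cast_card_offDiag {α : Type*} (T : Finset α) : (#T.offDiag : ℚ) = #T * (#T - 1) := by
  rw [offDiag_card, Nat.cast_sub (Nat.le_mul_self _)]
  push_cast
  ring

lemma cast_card_erase {α : Type*} [DecidableEq α] (s : Finset α) (a : α) :
    (#(s.erase a) : ℚ) = #s - 𝟙[a ∈ s] := by
  split_ifs with ha
  · exact cast_card_erase_of_mem ha
  · rw [erase_eq_of_notMem ha, sub_zero]

section Avoiding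

variable {α : Type*} [Fintype α] [DecidableEq α] {π : Perm α} {i : α}

/-- The elements that are neither `i` nor sent to `i` by `π`. If `σ i` is the minimum, these `x` are
the candidates for the last two positions `σ x` of an occurrence in `σ * π * σ⁻¹`. -/
def avoiding (π : Perm α) (i : α) : Finset α := {x | x ≠ i ∧ π x ≠ i}

lemma mem_avoiding {x : α} : x ∈ avoiding π i ↔ x ≠ i ∧ π x ≠ i := by simp [avoiding]

lemma avoiding_eq_erase_of_fixed (hi : π i = i) : avoiding π i = univ.erase i := by
  ext x
  have : π x = i ↔ x = i := by rw [← π.injective.eq_iff (a := x), hi]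
  simp [mem_avoiding, this]

lemma sum_offDiag_avoiding_of_fixed (hi : π i = i) :
    ∑ x ∈ (avoiding π i).offDiag, (1 + signCorrelation x.1 x.2 (π x.1) (π x.2)) / 4 =
      (3 * (Fintype.card α - 1) * (Fintype.card α - 2)
        + 2 * (Fintype.card α - 1) * (fixedPointCount π - 2)
        + (fixedPointCount π - 1) ^ 2 - fixedPointCount (π ^ 2) + 1) / 12 := by
  have fixed : {u ∈ univ.erase i | π u = u} = ({u | π u = u} : Finset α).erase i := by grind
  have image : {u ∈ univ.erase i | π u ∈ univ.erase i} = univ.erase i := by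
    grind [π.injective.eq_iff]
  have two_cycles : {u ∈ univ.erase i | π u ∈ univ.erase i ∧ π (π u) = u} =
      ({u | (π ^ 2) u = u} : Finset α).erase i := by
    simp only [pow_two, Perm.mul_apply]
    grind
  rw [avoiding_eq_erase_of_fixed hi, ← sum_div, sum_add_distrib, sum_const, nsmul_one,
    cast_card_offDiag, sum_offDiag_signCorrelation_map, fixed, image, two_cycles,
    cast_card_erase_of_mem (mem_univ i), cast_card_erase_of_mem (by simp [hi]),
    cast_card_erase_of_mem (by simp [hi, pow_two]), card_univ]
  unfold fixedPointCount
  ring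

lemma card_avoiding (hi : π i ≠ i) : (#(avoiding π i) : ℚ) = Fintype.card α - 2 := by
  have eq_erase : avoiding π i = (univ.erase i).erase (π⁻¹ i) := by
    grind [mem_avoiding, Perm.eq_inv_iff_eq]
  have mem : π⁻¹ i ∈ univ.erase i := by grind [Perm.inv_eq_iff_eq]
  rw [eq_erase, cast_card_erase_of_mem mem, cast_card_erase_of_mem (mem_univ i), card_univ]
  ring

lemma filter_avoiding_fixed (hi : π i ≠ i) :
    {u ∈ avoiding π i | π u = u} = ({u | π u = u} : Finset α) := by
  grind [mem_avoiding]

lemma card_avoiding_image (hi : π i ≠ i) :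
    (#{u ∈ avoiding π i | π u ∈ avoiding π i} : ℚ) =
      Fintype.card α - 3 + 𝟙[(π ^ 2) i = i] := by
  have eq_erase : {u ∈ avoiding π i | π u ∈ avoiding π i} =
      (avoiding π i).erase (π⁻¹ (π⁻¹ i)) := by
    grind [mem_avoiding, Perm.eq_inv_iff_eq]
  have mem : π⁻¹ (π⁻¹ i) ∈ avoiding π i ↔ (π ^ 2) i ≠ i := by
    simp only [pow_two, Perm.mul_apply]
    grind [mem_avoiding, Perm.eq_inv_iff_eq, Perm.inv_eq_iff_eq]
  rw [eq_erase, cast_card_erase, card_avoiding hi]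
  simp only [mem]
  split_ifs <;> grind

lemma card_avoiding_two_cycles (hi : π i ≠ i) :
    (#{u ∈ avoiding π i | π u ∈ avoiding π i ∧ π (π u) = u} : ℚ) =
      fixedPointCount (π ^ 2) - 2 * 𝟙[(π ^ 2) i = i] := by
  have eq_erase : {u ∈ avoiding π i | π u ∈ avoiding π i ∧ π (π u) = u} =
      (({u | (π ^ 2) u = u} : Finset α).erase i).erase (π⁻¹ i) := by
    simp only [pow_two, Perm.mul_apply]
    grind [mem_avoiding, Perm.eq_inv_iff_eq]
  have mem : π⁻¹ i ∈ ({u | (π ^ 2) u = u} : Finset α).erase i ↔ (π ^ 2) i = i := by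
    simp only [pow_two, Perm.mul_apply, mem_erase, mem_filter, mem_univ, true_and]
    grind [Perm.inv_eq_iff_eq, Perm.eq_inv_iff_eq]
  rw [eq_erase, cast_card_erase, cast_card_erase, fixedPointCount]
  simp only [mem, mem_filter, mem_univ, true_and]
  ring

lemma iverson_apply_mem_avoiding (hi : π i ≠ i) :
    𝟙[π i ∈ avoiding π i] = 1 - 𝟙[(π ^ 2) i = i] := by
  simp only [pow_two, Perm.mul_apply]
  grind [mem_avoiding]

lemma iverson_apply_apply_mem_avoiding (hi : π i ≠ i) :
    𝟙[π i ∈ avoiding π i ∧ π (π i) ∈ avoiding π i] =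
      1 - 𝟙[(π ^ 2) i = i] - 𝟙[(π ^ 3) i = i] := by
  simp only [pow_succ, pow_zero, one_mul, Perm.mul_apply]
  grind [mem_avoiding]

lemma sum_offDiag_avoiding_of_not_fixed (hi : π i ≠ i) :
    ∑ x ∈ (avoiding π i).offDiag, (2 / 3 + signCorrelation x.1 x.2 (π i) (π x.1)
        + signCorrelation x.1 x.2 (π x.1) (π x.2)) / 8 =
      (2 * (Fintype.card α - 2) * (Fintype.card α - 3) + (Fintype.card α - 2) * fixedPointCount π
        - Fintype.card α + 4 + fixedPointCount π ^ 2 - fixedPointCount π - fixedPointCount (π ^ 2)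
        + fixedPointCount π * 𝟙[(π ^ 2) i = i] - 𝟙[(π ^ 3) i = i]) / 24 := by
  rw [← sum_div, sum_add_distrib, sum_add_distrib, sum_const, nsmul_eq_mul, cast_card_offDiag,
    sum_offDiag_signCorrelation_left, sum_offDiag_signCorrelation_map, filter_avoiding_fixed hi,
    card_avoiding hi, card_avoiding_image hi, card_avoiding_two_cycles hi,
    iverson_apply_mem_avoiding hi, iverson_apply_apply_mem_avoiding hi, ← fixedPointCount]
  ring

end Avoiding

section Occurrences

variable {n : ℕ} [NeZero n] (π : Perm (Fin n)) {i : Fin n}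

/-- The number of occurrences of the vincular pattern `[1-2-3)`; positions are numbered from `0`. -/
def initialOcc123 : ℕ := #{x : Fin n × Fin n | 0 < x.1 ∧ x.1 < x.2 ∧ π 0 < π x.1 ∧ π x.1 < π x.2}

lemma initialOcc123_conj {σ : Perm (Fin n)} (hσ : σ ∈ permsSending i 0) :
    (initialOcc123 (σ * π * σ⁻¹) : ℚ) = ∑ x ∈ (avoiding π i).offDiag,
      𝟙[σ x.1 < σ x.2] * 𝟙[σ (π i) < σ (π x.1)] * 𝟙[σ (π x.1) < σ (π x.2)] := by
  rw [mem_permsSending] at hσ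
  have pos_iff (y : Fin n) : 0 < σ y ↔ y ≠ i := by
    rw [Fin.pos_iff_ne_zero, ← hσ, σ.injective.ne_iff]
  have conj_zero : (σ * π * σ⁻¹) 0 = σ (π i) := by simp [← hσ]
  have conj_apply (y : Fin n) : (σ * π * σ⁻¹) (σ y) = σ (π y) := by simp
  simp only [ite_zero_mul_ite_zero, mul_one, sum_boole, initialOcc123]
  refine congrArg _ (card_equiv (σ.prodCongr σ) fun x => ?_).symm
  simp only [mem_filter, mem_offDiag, mem_avoiding, mem_univ, true_and, Equiv.prodCongr_apply,
    Prod.map_fst, Prod.map_snd, conj_zero, conj_apply, and_assoc]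
  constructor
  · rintro ⟨hx, -, -, -, -, hlt⟩
    exact ⟨(pos_iff _).2 hx, hlt⟩
  · rintro ⟨hpos, hlt, hlt₁, hlt₂⟩
    refine ⟨(pos_iff _).1 hpos, (pos_iff _).1 ?_, (pos_iff _).1 ?_, (pos_iff _).1 ?_,
      ?_, hlt, hlt₁, hlt₂⟩
    · exact (Fin.zero_le _).trans_lt hlt₁
    · exact hpos.trans hlt
    · exact (Fin.zero_le _).trans_lt hlt₂
    · exact fun h => hlt.ne (congrArg σ h)

variable {π}

lemma expect_initialOcc123_conj_of_fixed (hi : π i = i) :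
    𝔼 σ ∈ permsSending i 0, (initialOcc123 (σ * π * σ⁻¹) : ℚ) =
      (3 * (n - 1) * (n - 2) + 2 * (n - 1) * (fixedPointCount π - 2)
        + (fixedPointCount π - 1) ^ 2 - fixedPointCount (π ^ 2) + 1) / 12 := by
  have first_smallest {σ : Perm (Fin n)} (hσ : σ ∈ permsSending i 0) {y : Fin n} (hy : π y ≠ i) :
      σ (π i) < σ (π y) := by
    rw [mem_permsSending] at hσ
    rw [hi, hσ, Fin.pos_iff_ne_zero, ← hσ]
    exact σ.injective.ne hy
  have sum_formula := sum_offDiag_avoiding_of_fixed hi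
  rw [Fintype.card_fin] at sum_formula
  rw [expect_congr rfl fun σ hσ => initialOcc123_conj π hσ, expect_sum_comm, ← sum_formula]
  refine sum_congr rfl fun x hx => ?_
  obtain ⟨⟨h₁, hπ₁⟩, ⟨h₂, hπ₂⟩, hne⟩ := by simpa only [mem_offDiag, mem_avoiding] using hx
  rw [← expect_iverson_lt_mul_lt 0 h₁ h₂ hπ₁ hπ₂ hne (π.injective.ne hne)]
  exact expect_congr rfl fun σ hσ => by rw [if_pos (first_smallest hσ hπ₁), mul_one]

lemma expect_initialOcc123_conj_of_not_fixed (hi : π i ≠ i) :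
    𝔼 σ ∈ permsSending i 0, (initialOcc123 (σ * π * σ⁻¹) : ℚ) =
      (2 * (n - 2) * (n - 3) + (n - 2) * fixedPointCount π - n + 4 + fixedPointCount π ^ 2
        - fixedPointCount π - fixedPointCount (π ^ 2)
        + fixedPointCount π * 𝟙[(π ^ 2) i = i] - 𝟙[(π ^ 3) i = i]) / 24 := by
  have sum_formula := sum_offDiag_avoiding_of_not_fixed hi
  rw [Fintype.card_fin] at sum_formula
  rw [expect_congr rfl fun σ hσ => initialOcc123_conj π hσ, expect_sum_comm, ← sum_formula]
  refine sum_congr rfl fun x hx => ?_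
  obtain ⟨⟨h₁, hπ₁⟩, ⟨h₂, hπ₂⟩, hne⟩ := by simpa only [mem_offDiag, mem_avoiding] using hx
  exact expect_iverson_lt_mul_lt_mul_lt h₁ h₂ hi hπ₁ hπ₂ hne (π.injective.ne h₁.symm)
    (π.injective.ne h₂.symm) (π.injective.ne hne)

variable (π)

theorem expect_initialOcc123_conj :
    𝔼 σ : Perm (Fin n), (initialOcc123 (σ * π * σ⁻¹) : ℚ) =
      (2 * n ^ 3 - 11 * n ^ 2 + 16 * n + (5 * n ^ 2 - 18 * n + 9) * fixedPointCount π
        + (4 * n - 6) * fixedPointCount π ^ 2 + fixedPointCount π ^ 3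
        - n * fixedPointCount (π ^ 2) - fixedPointCount (π ^ 3)) / (24 * n) := by
  have iverson_pow (k : ℕ) {i : Fin n} (hi : π i = i) : 𝟙[(π ^ k) i = i] = 1 :=
    if_pos (Perm.pow_apply_eq_self_of_apply_eq_self hi k)
  have conditional (i : Fin n) : 𝔼 σ ∈ permsSending i 0, (initialOcc123 (σ * π * σ⁻¹) : ℚ) =
      ((2 * n ^ 2 - 11 * n + 16 + (n - 3) * fixedPointCount π + fixedPointCount π ^ 2
          - fixedPointCount (π ^ 2))
        + (4 * n ^ 2 - 15 * n + 9 + (3 * n - 6) * fixedPointCount π + fixedPointCount π ^ 2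
          - fixedPointCount (π ^ 2)) * 𝟙[π i = i]
        + fixedPointCount π * 𝟙[(π ^ 2) i = i] - 𝟙[(π ^ 3) i = i]) / 24 := by
    by_cases hi : π i = i
    · rw [expect_initialOcc123_conj_of_fixed hi, iverson_pow 2 hi, iverson_pow 3 hi, if_pos hi]
      ring
    · rw [expect_initialOcc123_conj_of_not_fixed hi, if_neg hi]
      ring
  have n_ne_zero : (n : ℚ) ≠ 0 := NeZero.ne _
  rw [expect_perm_eq_expect_permsSending 0, expect_congr rfl fun i _ => conditional i,
    expect_eq_sum_div_card, ← sum_div]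
  simp only [sum_add_distrib, sum_sub_distrib, ← mul_sum, sum_iverson_fixed, sum_const, card_univ,
    Fintype.card_fin, nsmul_eq_mul]
  field_simp
  ring

end Occurrences

lemma sum_conjClass_eq_of_expect_conj {n : ℕ} {lam : n.Partition} {f : Perm (Fin n) → ℚ} {c : ℚ}
    (hf : ∀ π ∈ conjClass n lam, 𝔼 σ : Perm (Fin n), f (σ * π * σ⁻¹) = c) :
    ∑ π ∈ conjClass n lam, f π = #(conjClass n lam) * c := by
  have conj_mem (σ π : Perm (Fin n)) : π ∈ conjClass n lam ↔ σ * π * σ⁻¹ ∈ conjClass n lam := by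
    simp only [conjClass, mem_filter, mem_univ, true_and,
      Perm.partition_eq_of_isConj.1 (isConj_iff.2 ⟨σ, rfl⟩ : IsConj π (σ * π * σ⁻¹))]
  have conj_invariant (σ : Perm (Fin n)) :
      ∑ π ∈ conjClass n lam, f (σ * π * σ⁻¹) = ∑ π ∈ conjClass n lam, f π :=
    sum_equiv (MulAut.conj σ).toEquiv (conj_mem σ) fun _ _ => rfl
  calc ∑ π ∈ conjClass n lam, f π
      = 𝔼 σ : Perm (Fin n), ∑ π ∈ conjClass n lam, f (σ * π * σ⁻¹) := by
        simp only [conj_invariant, Fintype.expect_const]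
    _ = ∑ π ∈ conjClass n lam, 𝔼 σ : Perm (Fin n), f (σ * π * σ⁻¹) := expect_sum_comm ..
    _ = #(conjClass n lam) * c := by rw [sum_congr rfl hf, sum_const, nsmul_eq_mul]

lemma fixedPointCounts_of_mem_conjClass {n : ℕ} {lam : n.Partition} {π : Perm (Fin n)}
    (hπ : π ∈ conjClass n lam) :
    fixedPointCount π = lam.parts.count 1 ∧
      fixedPointCount (π ^ 2) = lam.parts.count 1 + 2 * lam.parts.count 2 ∧
      fixedPointCount (π ^ 3) = lam.parts.count 1 + 3 * lam.parts.count 3 := by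
  have parts_eq : π.partition.parts = lam.parts := (mem_filter.1 hπ).2
  rw [fixedPointCount_pow_prime π Nat.prime_two, fixedPointCount_pow_prime π Nat.prime_three,
    ← count_partition_of_one_lt π Nat.one_lt_two, ← count_partition_of_one_lt π (by norm_num),
    ← count_one_partition, parts_eq]
  exact ⟨rfl, rfl, rfl⟩

theorem stmt16 (n : ℕ) (hn : 3 ≤ n) (lam : n.Partition)
    (p q r X₁ X₂ X₃ X₄ : ℚ)
    (hp : p = (lam.parts.count 1 : ℚ)) (hq : q = (lam.parts.count 2 : ℚ))
    (hr : r = (lam.parts.count 3 : ℚ))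
    (hX1 : X₁ = p - 1) (hX2 : X₂ = (p - 1) * (p - 2) / 2 + q - 1)
    (hX3 : X₃ = (p - 1) * (p - 2) / 2 - q)
    (hX4 : X₄ = (p - 1) * (p - 2) * (p - 3) / 3 - p - r + 2) :
    (∑ π ∈ conjClass n lam,
      ((((Finset.univ : Finset (Fin n × Fin n)).filter fun x =>
          0 < (x.1 : ℕ) ∧ x.1 < x.2 ∧
          π ⟨0, by omega⟩ < π x.1 ∧ π x.1 < π x.2).card : ℚ)))
    = ((conjClass n lam).card : ℚ) *
      (((n - 1).choose 2 : ℚ) / 6 + (5 * (n : ℚ) - 7) * X₁ / 24 + X₂ / 8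
        + 5 * X₃ / 24 + X₄ / (8 * (n : ℚ))) := by
  have : NeZero n := ⟨by omega⟩
  have n_ne_zero : (n : ℚ) ≠ 0 := NeZero.ne _
  refine sum_conjClass_eq_of_expect_conj (f := fun π => (initialOcc123 π : ℚ)) fun π hπ => ?_
  obtain ⟨count_one, count_two, count_three⟩ := fixedPointCounts_of_mem_conjClass hπ
  rw [expect_initialOcc123_conj, count_one, count_two, count_three, Nat.cast_choose_two,
    Nat.cast_sub (by omega), hX1, hX2, hX3, hX4, hp, hq, hr]
  push_cast
  field_simp
  ring
end

section
/- Let n ≥ 3 and let λ be a partition of n. Then Σ_{π ∈ C_λ} peak(π) = |C_λ| · ( (n−2)/3 − (X₁ + X₂ + X₃ + X₄)/(n(n−1)) ), where peak(π) = #{i : 2 ≤ i ≤ n−1, π(i−1) < π(i) and π(i) > π(i+1)} is the number of peaks of π. -/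
open Equiv Finset

/-!
A conjugacy class is preserved by relabelling, so the number of its members with a peak at three
given consecutive positions may be averaged over the six relabellings `σ` of these positions. Let
`π` be any permutation.

* If `π` sends one of the three positions outside the window, exactly two of the six conjugates of
  `π` peak there. Values outside the window compare in the same way with all values inside it, so
  either the position of the maximum is moved rigidly by `σ`, or the two largest values lie in the
  window and the reversal of the window pairs the peaks with the non-peaks.
* If `π` acts on the window by `ρ`, the number of conjugates with a peak is `0`, `2` or `3`
  according as `ρ` is the identity, a transposition or a 3-cycle.

Hence only the members of the class that fix the window pointwise or rotate it deviate from the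
average `1 / 3`. They are counted by transitivity on injections of three points: among all
injections of `Fin 3`, a permutation with `p` fixed points and `r` cycles of length 3 fixes
`p (p - 1) (p - 2)` and turns `3 r` in each direction.
-/


section Cycles

open Function

variable {α β : Type*}

theorem minimalPeriod_eq_card_of_isCycleOn {π : Perm α} {s : Finset α} {x : α}
    (hs : π.IsCycleOn s) (hx : x ∈ s) : minimalPeriod π x = #s := by
  refine Nat.dvd_right_iff_eq.mp fun m => ?_
  rw [← isPeriodicPt_iff_minimalPeriod_dvd, ← hs.pow_apply_eq hx, IsPeriodicPt, IsFixedPt,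
    Perm.iterate_eq_pow]

theorem minimalPeriod_eq_of_semiconj {f : α → α} {g : β → β} {e : β → α}
    (he : Semiconj e g f) (hinj : Injective e) (b : β) :
    minimalPeriod f (e b) = minimalPeriod g b := by
  refine minimalPeriod_eq_minimalPeriod_iff.mpr fun m => ?_
  rw [IsPeriodicPt, IsFixedPt, ← (he.iterate_right m).eq, hinj.eq_iff, IsPeriodicPt, IsFixedPt]

theorem exists_embedding_semiconj_of_minimalPeriod_eq [Fintype β] (π : Perm α)
    {ρ : Perm β} (hρ : ρ.IsCycleOn (univ : Finset β)) (b₀ : β)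
    {x : α} (hx : minimalPeriod π x = Fintype.card β) :
    ∃ e : β ↪ α, Semiconj e ρ π ∧ e b₀ = x := by
  choose index index_lt index_spec using fun b => hρ.exists_pow_eq (mem_univ b₀) (mem_univ b)
  rw [card_univ, ← hx] at index_lt
  have pow_eq {m n : ℕ} (h : (ρ ^ m) b₀ = (ρ ^ n) b₀) : π^[m] x = π^[n] x := by
    have : m % minimalPeriod π x = n % minimalPeriod π x := by
      rw [hx, ← card_univ]
      exact (hρ.pow_apply_eq_pow_apply (mem_univ b₀)).mp h
    rw [← iterate_mod_minimalPeriod_eq, this, iterate_mod_minimalPeriod_eq]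
  refine ⟨⟨fun b => π^[index b] x, fun b c hbc => ?_⟩, fun b => ?_, ?_⟩
  · rw [← index_spec b, ← index_spec c,
      (iterate_eq_iterate_iff_of_lt_minimalPeriod (index_lt b) (index_lt c)).mp hbc]
  · change π^[index (ρ b)] x = π (π^[index b] x)
    rw [← iterate_succ_apply' π, pow_eq]
    rw [index_spec, pow_succ', Perm.mul_apply, index_spec]
  · exact pow_eq (n := 0) (index_spec b₀)

instance decidableSemiconj [Fintype β] [DecidableEq α] (e : β → α) (g : β → β) (f : α → α) :
    Decidable (Semiconj e g f) :=
  inferInstanceAs (Decidable (∀ b, e (g b) = f (e b)))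

variable [Fintype α] [DecidableEq α] (π : Perm α)

theorem count_one_parts_partition :
    π.partition.parts.count 1 = Fintype.card {x // π x = x} := by
  have hcycle : 1 ∉ π.cycleType := fun h => lt_irrefl 1 (Perm.one_lt_of_mem_cycleType h)
  rw [Perm.parts_partition, Multiset.count_add, Multiset.count_eq_zero_of_notMem hcycle,
    Multiset.count_replicate_self, zero_add, ← card_compl, Fintype.card_subtype]
  congr 1
  ext x
  simp

theorem count_parts_partition_of_ne_one {k : ℕ} (hk : k ≠ 1) :
    π.partition.parts.count k = #{c ∈ π.cycleFactorsFinset | #c.support = k} := by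
  rw [Perm.parts_partition, Multiset.count_add, Multiset.count_replicate, if_neg hk.symm,
    add_zero, Perm.cycleType_def, Multiset.count_map]
  simp only [Finset.card, filter_val, Function.comp_apply, eq_comm]
  rfl

theorem card_filter_minimalPeriod_eq {k : ℕ} (hk : k ≠ 1) :
    #{x | minimalPeriod π x = k} = π.partition.parts.count k * k := by
  have mem_cycleOf (x) (hx : minimalPeriod π x = k) :
      π.cycleOf x ∈ π.cycleFactorsFinset ∧ x ∈ (π.cycleOf x).support := by
    have : π x ≠ x := fun h => hk (hx ▸ minimalPeriod_eq_one_iff_isFixedPt.mpr h)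
    simpa [Perm.cycleOf_mem_cycleFactorsFinset_iff, Perm.mem_support_cycleOf_iff] using this
  have period_eq {c} (hc : c ∈ π.cycleFactorsFinset) {x} (hx : x ∈ c.support) :
      minimalPeriod π x = #c.support :=
    minimalPeriod_eq_card_of_isCycleOn (Perm.isCycleOn_support_of_mem_cycleFactorsFinset hc) hx
  have mapsTo : ∀ x ∈ ({x | minimalPeriod π x = k} : Finset α),
      π.cycleOf x ∈ ({c ∈ π.cycleFactorsFinset | #c.support = k} : Finset (Perm α)) := by
    intro x hx
    rw [mem_filter_univ] at hx
    obtain ⟨hc, hxc⟩ := mem_cycleOf x hx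
    exact mem_filter.mpr ⟨hc, period_eq hc hxc ▸ hx⟩
  rw [card_eq_sum_card_fiberwise mapsTo, count_parts_partition_of_ne_one π hk]
  refine sum_const_nat fun c hc => ?_
  obtain ⟨hc, hck⟩ := mem_filter.mp hc
  rw [← hck]
  congr 1
  ext x
  simp only [mem_filter, mem_univ, true_and]
  constructor
  · rintro ⟨hx, rfl⟩
    exact (mem_cycleOf x (hx.trans hck)).2
  · exact fun hx => ⟨period_eq hc hx, (Perm.cycle_is_cycleOf hx hc).symm⟩

variable [Fintype β]

theorem card_embedding_semiconj_one :
    #{e : β ↪ α | Semiconj e (1 : Perm β) π} =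
      (π.partition.parts.count 1).descFactorial (Fintype.card β) := by
  rw [count_one_parts_partition, ← Fintype.card_embedding_eq, ← Fintype.card_subtype]
  exact Fintype.card_congr
    { toFun e := e.1.codRestrict {x | π x = x} fun b => (e.2 b).symm
      invFun e := ⟨e.trans (Embedding.subtype _), fun b => (e b).2.symm⟩ }

theorem card_embedding_semiconj_of_isCycleOn [Nontrivial β] {ρ : Perm β}
    (hρ : ρ.IsCycleOn (univ : Finset β)) :
    #{e : β ↪ α | Semiconj e ρ π} =
      π.partition.parts.count (Fintype.card β) * Fintype.card β := by
  obtain ⟨b₀⟩ := ‹Nontrivial β›.to_nonempty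
  rw [← card_filter_minimalPeriod_eq π Fintype.one_lt_card.ne']
  refine card_bij (fun e _ => e b₀) (fun e he => ?_) (fun e he e' he' h₀ => ?_) fun x hx => ?_
  · rw [mem_filter_univ] at he ⊢
    rw [minimalPeriod_eq_of_semiconj he e.injective,
      minimalPeriod_eq_card_of_isCycleOn hρ (mem_univ b₀), card_univ]
  · rw [mem_filter_univ] at he he'
    ext b
    obtain ⟨m, -, rfl⟩ := hρ.exists_pow_eq (mem_univ b₀) (mem_univ b)
    rw [← Perm.iterate_eq_pow, (he.iterate_right m).eq, (he'.iterate_right m).eq, h₀]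
  · obtain ⟨e, he, hex⟩ := exists_embedding_semiconj_of_minimalPeriod_eq π hρ b₀
      ((mem_filter_univ x).mp hx)
    exact ⟨e, (mem_filter_univ e).mpr he, hex⟩

end Cycles

section ConjugationInvariant

open Function

theorem sum_conj_eq_sum {G M : Type*} [Group G] [AddCommMonoid M] {C : Finset G}
    (hC : ∀ g, ∀ x ∈ C, g * x * g⁻¹ ∈ C) (g : G) (f : G → M) :
    ∑ x ∈ C, f (g * x * g⁻¹) = ∑ x ∈ C, f x := by
  refine sum_equiv (MulAut.conj g).toEquiv (fun x => ⟨hC g x, fun hx => ?_⟩) fun x _ => rfl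
  simpa [mul_assoc] using hC g⁻¹ _ hx

variable {α β : Type*} [Fintype α] [DecidableEq α] [Fintype β] {C : Finset (Perm α)}

theorem card_filter_semiconj_mul_descFactorial
    (hC : ∀ σ, ∀ π ∈ C, σ * π * σ⁻¹ ∈ C) (ρ : Perm β) (e : β ↪ α) :
    #{π ∈ C | Semiconj e ρ (π : Perm α)} * (Fintype.card α).descFactorial (Fintype.card β) =
      ∑ π ∈ C, #{e : β ↪ α | Semiconj e ρ π} := by
  classical
  have card_eq (e' : β ↪ α) : #{π ∈ C | Semiconj e' ρ (π : Perm α)} =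
      #{π ∈ C | Semiconj e ρ (π : Perm α)} := by
    obtain ⟨σ, rfl⟩ := Perm.exists_smul_eq_embedding e e'
    simp only [card_filter]
    rw [← sum_conj_eq_sum hC σ]
    exact sum_congr rfl fun π _ => if_congr (by simp [Semiconj]) rfl rfl
  simp only [card_filter]
  rw [sum_comm]
  simp only [← card_filter, card_eq, sum_const, card_univ, Fintype.card_embedding_eq, smul_eq_mul,
    mul_comm]

end ConjugationInvariant

section Peak

open Function

theorem lt_of_lt_notMem_ordConnected {α : Type*} [LinearOrder α] {s : Set α}
    (hs : s.OrdConnected) {x y z : α} (hx : x ∈ s) (hy : y ∈ s) (hz : z ∉ s) (hxz : x < z) :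
    y < z :=
  lt_of_not_ge fun hzy => hz (hs.out hx hy ⟨hxz.le, hzy⟩)

theorem lt_of_notMem_ordConnected_of_lt {α : Type*} [LinearOrder α] {s : Set α}
    (hs : s.OrdConnected) {x y z : α} (hx : x ∈ s) (hy : y ∈ s) (hz : z ∉ s) (hzx : z < x) :
    z < y :=
  lt_of_not_ge fun hyz => hz (hs.out hy hx ⟨hyz, hzx.le⟩)

theorem viaEmbedding_mem_range {α β : Type*} (e : β ↪ α) (σ : Perm β) {x : α}
    (hx : x ∈ Set.range e) : σ.viaEmbedding e x ∈ Set.range e := by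
  obtain ⟨b, rfl⟩ := hx
  exact ⟨σ b, (σ.viaEmbedding_apply e b).symm⟩

theorem viaEmbedding_lt_viaEmbedding {α β : Type*} [LinearOrder α] {e : β ↪ α}
    (he : (Set.range e).OrdConnected) (σ : Perm β) {x y : α} (hxy : x < y)
    (hmem : ¬(x ∈ Set.range e ∧ y ∈ Set.range e)) :
    σ.viaEmbedding e x < σ.viaEmbedding e y := by
  by_cases hx : x ∈ Set.range e <;> by_cases hy : y ∈ Set.range e
  · exact absurd ⟨hx, hy⟩ hmem
  · rw [σ.viaEmbedding_apply_of_notMem e y hy]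
    exact lt_of_lt_notMem_ordConnected he hx (viaEmbedding_mem_range e σ hx) hy hxy
  · rw [σ.viaEmbedding_apply_of_notMem e x hx]
    exact lt_of_notMem_ordConnected_of_lt he hy (viaEmbedding_mem_range e σ hy) hx hxy
  · rwa [σ.viaEmbedding_apply_of_notMem e x hx, σ.viaEmbedding_apply_of_notMem e y hy]

theorem conj_viaEmbedding_comp {α β : Type*} (e : β ↪ α) (σ : Perm β) (π : Perm α) :
    ⇑(σ.viaEmbedding e * π * (σ.viaEmbedding e)⁻¹) ∘ e = (σ.viaEmbedding e ∘ π ∘ e) ∘ ⇑σ⁻¹ := by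
  funext b
  have inv_apply : (σ.viaEmbedding e)⁻¹ (e b) = e (σ⁻¹ b) := by
    rw [Perm.inv_eq_iff_eq, σ.viaEmbedding_apply, ← Perm.mul_apply, mul_inv_cancel, Perm.one_apply]
  simp only [Perm.coe_mul, comp_apply, inv_apply]

theorem exists_perm_semiconj_of_forall_mem_range {α β : Type*} [Finite β] (e : β ↪ α) (π : Perm α)
    (h : ∀ b, π (e b) ∈ Set.range e) : ∃ ρ : Perm β, Semiconj e ρ π := by
  choose f hf using h
  have hinj : Injective f := fun b c hbc =>
    e.injective (π.injective ((hf b).symm.trans (hbc ▸ hf c)))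
  exact ⟨Equiv.ofBijective f (Finite.injective_iff_bijective.mp hinj), hf⟩

/-- The three-letter word `w` is a peak: its middle letter exceeds both others. For a permutation
`π` and a window `e` of consecutive positions, `IsPeak (π ∘ e)` says that `π` peaks there. -/
def IsPeak {α : Type*} [LT α] (w : Fin 3 → α) : Prop :=
  w 0 < w 1 ∧ w 2 < w 1

instance decidableIsPeak {α : Type*} [LT α] [DecidableLT α] (w : Fin 3 → α) :
    Decidable (IsPeak w) :=
  inferInstanceAs (Decidable (_ ∧ _))

theorem isPeak_comp_inv_iff {α : Type*} [LT α] {w : Fin 3 → α} {σ : Perm (Fin 3)} {m : Fin 3}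
    (hm : σ m = 1) : IsPeak (w ∘ ⇑σ⁻¹) ↔ ∀ t ≠ m, w t < w m := by
  obtain rfl : m = σ⁻¹ 1 := Perm.eq_inv_iff_eq.mpr hm
  rw [← σ⁻¹.forall_congr_right]
  simp [IsPeak, Fin.forall_fin_succ]

variable {α : Type*} [LinearOrder α] {e : Fin 3 ↪o α}

theorem card_filter_isPeak_comp_inv_of_forall_lt (m : Fin 3) {v : Perm (Fin 3) → Fin 3 → α}
    (hm : ∀ σ, ∀ t ≠ m, v σ t < v σ m) :
    #{σ : Perm (Fin 3) | IsPeak (v σ ∘ ⇑σ⁻¹)} = 2 := by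
  have isPeak_iff (σ : Perm (Fin 3)) : IsPeak (v σ ∘ ⇑σ⁻¹) ↔ σ m = 1 := by
    refine ⟨fun h => ?_, fun h => (isPeak_comp_inv_iff h).mpr (hm σ)⟩
    by_contra hne
    have := (isPeak_comp_inv_iff (σ.apply_symm_apply 1)).mp h m (by grind)
    exact lt_asymm this (hm σ _ (by grind))
  simp only [isPeak_iff]
  exact (by decide : ∀ m : Fin 3, #{σ : Perm (Fin 3) | σ m = 1} = 2) m

/-- Composing `σ` with the reversal of `Fin 3` keeps `σ s = 1` and flips the comparison of `σ a`
with `σ b`, so each alternative holds for one of the two `σ` sending its point to `1`. -/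
theorem card_filter_apply_eq_one_and_lt : ∀ s t a b : Fin 3, s ≠ t → a ≠ b →
    #{σ : Perm (Fin 3) | σ s = 1 ∧ σ b < σ a ∨ σ t = 1 ∧ σ a < σ b} = 2 := by
  decide

theorem card_filter_isPeak_conj_fin_three : ∀ ρ : Perm (Fin 3),
    #{σ : Perm (Fin 3) | IsPeak ⇑(σ * ρ * σ⁻¹)} + 2 * (if 1 = ρ then 1 else 0) =
      2 + (if finRotate 3 = ρ then 1 else 0) + (if (finRotate 3)⁻¹ = ρ then 1 else 0) := by
  decide

theorem card_filter_isPeak_of_lt_of_notMem_range (he : (Set.range e).OrdConnected)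
    {w : Fin 3 → α} {s t u a b : Fin 3} (hst : s ≠ t) (hs : w s = e a) (ht : w t = e b)
    (hab : a ≠ b) (hu : w u ∉ Set.range e) (hus : w u < w s) :
    #{σ : Perm (Fin 3) | IsPeak ((σ.viaEmbedding e.toEmbedding ∘ w) ∘ ⇑σ⁻¹)} = 2 := by
  rw [← card_filter_apply_eq_one_and_lt s t a b hst hab]
  congr 1
  ext σ
  have apply_s : σ.viaEmbedding e.toEmbedding (w s) = e (σ a) :=
    hs ▸ σ.viaEmbedding_apply e.toEmbedding a
  have apply_t : σ.viaEmbedding e.toEmbedding (w t) = e (σ b) :=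
    ht ▸ σ.viaEmbedding_apply e.toEmbedding b
  have apply_u_lt (c : Fin 3) : σ.viaEmbedding e.toEmbedding (w u) < e c := by
    rw [σ.viaEmbedding_apply_of_notMem e.toEmbedding _ hu]
    exact lt_of_notMem_ordConnected_of_lt he ⟨a, hs.symm⟩ ⟨c, rfl⟩ hu hus
  have hus' : u ≠ s := fun h => hu ⟨a, h ▸ hs.symm⟩
  have hut : u ≠ t := fun h => hu ⟨b, h ▸ ht.symm⟩
  have eq_or (x : Fin 3) : x = s ∨ x = t ∨ x = u := by lia
  have ne_one {x y : Fin 3} (hx : σ x = 1) (hxy : x ≠ y) : σ y ≠ 1 :=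
    fun hy => hxy (σ.injective (hx.trans hy.symm))
  simp only [mem_filter, mem_univ, true_and]
  rcases eq_or (σ⁻¹ 1) with h | h | h <;> rw [Perm.inv_eq_iff_eq, eq_comm] at h <;>
    rw [isPeak_comp_inv_iff h]
  · have := ne_one h hst
    grind [OrderEmbedding.lt_iff_lt]
  · have := ne_one h hst.symm
    grind [OrderEmbedding.lt_iff_lt]
  · have := ne_one h hus'
    have := ne_one h hut
    grind [OrderEmbedding.lt_iff_lt]

theorem card_filter_isPeak_of_notMem_range (he : (Set.range e).OrdConnected) {w : Fin 3 → α}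
    (hw : Injective w) {u : Fin 3} (hu : w u ∉ Set.range e) :
    #{σ : Perm (Fin 3) | IsPeak ((σ.viaEmbedding e.toEmbedding ∘ w) ∘ ⇑σ⁻¹)} = 2 := by
  obtain ⟨m, hm⟩ := Finite.exists_max w
  have hmax : ∀ t ≠ m, w t < w m := fun t ht => (hm t).lt_of_ne (hw.ne ht)
  by_cases hstable : ∀ t ≠ m, ¬(w t ∈ Set.range e ∧ w m ∈ Set.range e)
  · exact card_filter_isPeak_comp_inv_of_forall_lt m fun σ t ht =>
      viaEmbedding_lt_viaEmbedding he σ (hmax t ht) (hstable t ht)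
  · push Not at hstable
    obtain ⟨s, hsm, ⟨b, hb⟩, a, ha⟩ := hstable
    have hab : a ≠ b := fun h => hsm (hw (hb.symm.trans (h ▸ ha)))
    exact card_filter_isPeak_of_lt_of_notMem_range he hsm.symm ha.symm hb.symm hab hu
      (hmax u fun h => hu (h ▸ ⟨a, ha⟩))

theorem card_filter_isPeak_of_semiconj {π : Perm α} {ρ : Perm (Fin 3)} (h : Semiconj e ρ π) :
    #{σ : Perm (Fin 3) | IsPeak ((σ.viaEmbedding e.toEmbedding ∘ π ∘ e) ∘ ⇑σ⁻¹)} =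
      #{σ : Perm (Fin 3) | IsPeak ⇑(σ * ρ * σ⁻¹)} := by
  have comp_eq (σ : Perm (Fin 3)) :
      (σ.viaEmbedding e.toEmbedding ∘ π ∘ e) ∘ ⇑σ⁻¹ = e ∘ ⇑(σ * ρ * σ⁻¹) := by
    funext t
    simp only [comp_apply, ← h.eq, Perm.mul_apply]
    exact σ.viaEmbedding_apply e.toEmbedding _
  refine congrArg card (filter_congr fun σ _ => ?_)
  rw [comp_eq]
  simp only [IsPeak, comp_apply, e.lt_iff_lt]

theorem card_filter_isPeak_conj (he : (Set.range e).OrdConnected) (π : Perm α) :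
    #{σ : Perm (Fin 3) | IsPeak (⇑(σ.viaEmbedding e.toEmbedding * π *
        (σ.viaEmbedding e.toEmbedding)⁻¹) ∘ e)} +
        2 * (if Semiconj e (1 : Perm (Fin 3)) π then 1 else 0) =
      2 + (if Semiconj e (finRotate 3) π then 1 else 0) +
        (if Semiconj e ((finRotate 3)⁻¹ : Perm (Fin 3)) π then 1 else 0) := by
  have conj_comp (σ : Perm (Fin 3)) := conj_viaEmbedding_comp e.toEmbedding σ π
  simp only [RelEmbedding.coe_toEmbedding] at conj_comp
  simp only [conj_comp]
  by_cases hmem : ∀ t, π (e t) ∈ Set.range e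
  · obtain ⟨ρ, hρ⟩ := exists_perm_semiconj_of_forall_mem_range e.toEmbedding π hmem
    have semiconj_iff (ρ' : Perm (Fin 3)) : Semiconj e ρ' π ↔ ρ' = ρ :=
      ⟨fun h => Equiv.ext fun t => e.injective ((h t).trans (hρ t).symm), fun h => h ▸ hρ⟩
    simp only [semiconj_iff, card_filter_isPeak_of_semiconj hρ]
    exact card_filter_isPeak_conj_fin_three ρ
  · push Not at hmem
    obtain ⟨u, hu⟩ := hmem
    have not_semiconj (ρ : Perm (Fin 3)) : ¬ Semiconj e ρ π := fun h => hu ⟨ρ u, h u⟩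
    have card_eq := card_filter_isPeak_of_notMem_range he (π.injective.comp e.injective) hu
    simp only [card_eq, not_semiconj, if_false]

variable {C : Finset (Perm α)}

theorem six_mul_card_filter_isPeak (hC : ∀ σ, ∀ π ∈ C, σ * π * σ⁻¹ ∈ C)
    (he : (Set.range e).OrdConnected) :
    6 * #{π ∈ C | IsPeak (⇑(π : Perm α) ∘ e)} +
        2 * #{π ∈ C | Semiconj e (1 : Perm (Fin 3)) (π : Perm α)} =
      2 * #C + #{π ∈ C | Semiconj e (finRotate 3) (π : Perm α)} +
        #{π ∈ C | Semiconj e ((finRotate 3)⁻¹ : Perm (Fin 3)) (π : Perm α)} := by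
  have sum_orbit : ∑ π ∈ C, #{σ : Perm (Fin 3) | IsPeak (⇑(σ.viaEmbedding e.toEmbedding * π *
      (σ.viaEmbedding e.toEmbedding)⁻¹) ∘ e)} = 6 * #{π ∈ C | IsPeak (⇑(π : Perm α) ∘ e)} := by
    simp only [card_filter]
    rw [sum_comm, sum_congr rfl fun (σ : Perm (Fin 3)) _ =>
      sum_conj_eq_sum hC (σ.viaEmbedding e.toEmbedding) fun π => if IsPeak (⇑π ∘ e) then 1 else 0]
    rw [sum_const, card_univ, Fintype.card_perm, Fintype.card_fin, smul_eq_mul]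
    rfl
  have sum_identity := sum_congr rfl fun π (_ : π ∈ C) => card_filter_isPeak_conj he π
  simpa only [sum_add_distrib, sum_orbit, ← mul_sum, ← card_filter, sum_const, smul_eq_mul,
    mul_comm #C] using sum_identity

theorem isCycleOn_univ_finRotate (n : ℕ) :
    (finRotate (n + 2)).IsCycleOn (univ : Finset (Fin (n + 2))) := by
  have apply_ne (i) : finRotate (n + 2) i ≠ i :=
    Perm.mem_support.mp (support_finRotate ▸ mem_univ i)
  rw [coe_univ, ← Set.eq_univ_of_forall apply_ne]
  exact isCycle_finRotate.isCycleOn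

theorem three_mul_card_filter_isPeak_mul_descFactorial [Fintype α]
    (hC : ∀ σ, ∀ π ∈ C, σ * π * σ⁻¹ ∈ C) (he : (Set.range e).OrdConnected) :
    3 * #{π ∈ C | IsPeak (⇑(π : Perm α) ∘ e)} * (Fintype.card α).descFactorial 3 +
        ∑ π ∈ C, (π.partition.parts.count 1).descFactorial 3 =
      #C * (Fintype.card α).descFactorial 3 + 3 * ∑ π ∈ C, π.partition.parts.count 3 := by
  have card_one : #{π ∈ C | Semiconj e (1 : Perm (Fin 3)) (π : Perm α)} *
      (Fintype.card α).descFactorial 3 =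
        ∑ π ∈ C, (π.partition.parts.count 1).descFactorial 3 := by
    simpa only [card_embedding_semiconj_one, Fintype.card_fin, RelEmbedding.coe_toEmbedding]
      using card_filter_semiconj_mul_descFactorial hC 1 e.toEmbedding
  have card_cycle {ρ : Perm (Fin 3)} (hρ : ρ.IsCycleOn (univ : Finset (Fin 3))) :
      #{π ∈ C | Semiconj e ρ (π : Perm α)} * (Fintype.card α).descFactorial 3 =
        (∑ π ∈ C, π.partition.parts.count 3) * 3 := by
    rw [sum_mul]
    simpa only [card_embedding_semiconj_of_isCycleOn _ hρ, Fintype.card_fin,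
      RelEmbedding.coe_toEmbedding] using card_filter_semiconj_mul_descFactorial hC ρ e.toEmbedding
  have rotate_isCycleOn : (finRotate 3).IsCycleOn (univ : Finset (Fin 3)) :=
    isCycleOn_univ_finRotate 1
  have card_rotate := card_cycle rotate_isCycleOn
  have card_rotate_inv := card_cycle rotate_isCycleOn.inv
  have scaled := congrArg (· * (Fintype.card α).descFactorial 3) (six_mul_card_filter_isPeak hC he)
  simp only [add_mul] at scaled
  linarith

end Peak

section Windows

variable {n : ℕ}

/-- The triples `(i, i + 1, i + 2)` in `Fin n`, the possible positions of a peak. -/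
def consecutiveTriples (n : ℕ) : Finset (Fin n × Fin n × Fin n) :=
  {x | (x.1 : ℕ) + 1 = x.2.1 ∧ (x.2.1 : ℕ) + 1 = x.2.2}

theorem card_consecutiveTriples (n : ℕ) : #(consecutiveTriples n) = n - 2 := by
  rw [← card_range (n - 2)]
  refine card_bij (fun x _ => (x.1 : ℕ)) (fun x hx => ?_) (fun x hx y hy hxy => ?_) fun m hm => ?_
  · simp only [consecutiveTriples, mem_filter_univ, mem_range] at hx ⊢
    lia
  · simp only [consecutiveTriples, mem_filter_univ] at hx hy
    simp only [Prod.ext_iff, Fin.ext_iff]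
    lia
  · rw [mem_range] at hm
    exact ⟨(⟨m, by lia⟩, ⟨m + 1, by lia⟩, ⟨m + 2, by lia⟩), by simp [consecutiveTriples], rfl⟩

theorem exists_orderEmbedding_of_mem_consecutiveTriples {x : Fin n × Fin n × Fin n}
    (hx : x ∈ consecutiveTriples n) :
    ∃ e : Fin 3 ↪o Fin n, (Set.range e).OrdConnected ∧ ⇑e = ![x.1, x.2.1, x.2.2] := by
  obtain ⟨i, j, k⟩ := x
  obtain ⟨hij, hjk⟩ := (mem_filter_univ _).mp hx
  dsimp only at hij hjk
  have strictMono : StrictMono ![i, j, k] := by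
    have hij' : i < j := by lia
    have hjk' : j < k := by lia
    simp [hij', hjk']
  refine ⟨OrderEmbedding.ofStrictMono _ strictMono, ?_, rfl⟩
  have range_eq : Set.range ![i, j, k] = Set.Icc i k := by
    ext m
    simp only [Matrix.range_cons, Matrix.range_empty, Set.union_empty, Set.mem_union,
      Set.mem_singleton_iff, Set.mem_Icc]
    lia
  rw [OrderEmbedding.coe_ofStrictMono, range_eq]
  exact Set.ordConnected_Icc

theorem cast_descFactorial_three {R : Type*} [CommRing R] (m : ℕ) :
    (m.descFactorial 3 : R) = m * (m - 1) * (m - 2) := by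
  rw [Nat.descFactorial_succ, Nat.cast_mul, Nat.cast_descFactorial_two]
  rcases lt_or_ge m 2 with hm | hm
  · interval_cases m <;> simp
  · rw [Nat.cast_sub hm]
    ring

theorem conj_mem_conjClass {lam : n.Partition} (σ : Perm (Fin n)) {π : Perm (Fin n)}
    (hπ : π ∈ conjClass n lam) : σ * π * σ⁻¹ ∈ conjClass n lam := by
  rw [conjClass, mem_filter_univ] at hπ ⊢
  rw [← Perm.partition_eq_of_isConj.mp (isConj_iff.mpr ⟨σ, rfl⟩ : IsConj π _), hπ]

theorem card_filter_peak_conjClass (lam : n.Partition) {x : Fin n × Fin n × Fin n}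
    (hx : x ∈ consecutiveTriples n) :
    (#{π ∈ conjClass n lam | π x.1 < π x.2.1 ∧ π x.2.2 < π x.2.1} : ℚ) =
      #(conjClass n lam) * (1 / 3 - ((lam.parts.count 1).descFactorial 3 / 3 - lam.parts.count 3) /
        n.descFactorial 3) := by
  obtain ⟨e, he, coe_e⟩ := exists_orderEmbedding_of_mem_consecutiveTriples hx
  have parts_eq {π} (hπ : π ∈ conjClass n lam) : π.partition.parts = lam.parts :=
    (mem_filter_univ π).mp hπ
  have peak_count := three_mul_card_filter_isPeak_mul_descFactorial
    (fun σ π hπ => conj_mem_conjClass (lam := lam) σ hπ) he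
  rw [sum_const_nat fun π hπ => by rw [parts_eq hπ],
    sum_const_nat fun π hπ => by rw [parts_eq hπ], Fintype.card_fin] at peak_count
  have descFactorial_ne : (n.descFactorial 3 : ℚ) ≠ 0 := by
    have hn : 3 ≤ n := by simpa using Fintype.card_le_of_embedding e.toEmbedding
    exact_mod_cast Nat.descFactorial_eq_zero_iff_lt.not.mpr hn.not_gt
  simp only [coe_e, IsPeak, Function.comp_apply, Matrix.cons_val] at peak_count
  have peak_count_cast := congrArg (Nat.cast : ℕ → ℚ) peak_count
  push_cast at peak_count_cast
  field_simp
  linear_combination peak_count_cast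

theorem sum_card_peak_eq_sum_consecutiveTriples (C : Finset (Perm (Fin n))) :
    ∑ π ∈ C, #{x : Fin n × Fin n × Fin n | (x.1 : ℕ) + 1 = (x.2.1 : ℕ) ∧
        (x.2.1 : ℕ) + 1 = (x.2.2 : ℕ) ∧ π x.1 < π x.2.1 ∧ π x.2.2 < π x.2.1} =
      ∑ x ∈ consecutiveTriples n, #{π ∈ C | π x.1 < π x.2.1 ∧ π x.2.2 < π x.2.1} := by
  refine Eq.trans (sum_congr rfl fun π _ => ?_)
    (sum_card_bipartiteAbove_eq_sum_card_bipartiteBelow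
      fun (π : Perm (Fin n)) (x : Fin n × Fin n × Fin n) => π x.1 < π x.2.1 ∧ π x.2.2 < π x.2.1)
  simp only [bipartiteAbove, consecutiveTriples, filter_filter, and_assoc]

end Windows

theorem stmt18 (n : ℕ) (hn : 3 ≤ n) (lam : n.Partition)
    (p q r X₁ X₂ X₃ X₄ : ℚ)
    (hp : p = (lam.parts.count 1 : ℚ)) (hq : q = (lam.parts.count 2 : ℚ))
    (hr : r = (lam.parts.count 3 : ℚ))
    (hX1 : X₁ = p - 1) (hX2 : X₂ = (p - 1) * (p - 2) / 2 + q - 1)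
    (hX3 : X₃ = (p - 1) * (p - 2) / 2 - q)
    (hX4 : X₄ = (p - 1) * (p - 2) * (p - 3) / 3 - p - r + 2) :
    (∑ π ∈ conjClass n lam,
      ((((Finset.univ : Finset (Fin n × Fin n × Fin n)).filter fun x =>
          (x.1 : ℕ) + 1 = (x.2.1 : ℕ) ∧ (x.2.1 : ℕ) + 1 = (x.2.2 : ℕ) ∧ π x.1 < π x.2.1 ∧ π x.2.2 < π x.2.1).card : ℚ)))
    = ((conjClass n lam).card : ℚ) *
      (((n : ℚ) - 2) / 3 - (X₁ + X₂ + X₃ + X₄) / ((n : ℚ) * ((n : ℚ) - 1))) := by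
  have hn' : (3 : ℚ) ≤ n := mod_cast hn
  have n_ne : (n : ℚ) ≠ 0 := by linarith
  have n_sub_one_ne : (n : ℚ) - 1 ≠ 0 := by linarith
  have n_sub_two_ne : (n : ℚ) - 2 ≠ 0 := by linarith
  have double_count := congrArg (Nat.cast : ℕ → ℚ)
    (sum_card_peak_eq_sum_consecutiveTriples (conjClass n lam))
  push_cast at double_count
  rw [double_count, sum_congr rfl fun x hx => card_filter_peak_conjClass lam hx, sum_const,
    card_consecutiveTriples, nsmul_eq_mul, Nat.cast_sub (by lia), cast_descFactorial_three,
    cast_descFactorial_three, ← hp, ← hr, hX1, hX2, hX3, hX4]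
  push_cast
  field_simp
  ring
end
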